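/- For every ε > 0 there exist a number of agents n, finite response spaces X_j each containing an opt-out value ⊥, an ε-differentially private mechanism M : Π_j X_j → PMF(O), a post-processing function f : O → C with C finite, a real-valued utility function u : C → ℝ, an agent j, and an environment x₋ⱼ such that for every response a ∈ X_j with a ≠ ⊥, Σ_{c∈C} u(c)·P(f(M(a, x₋ⱼ)) = c) < Σ_{c∈C} u(c)·P(f(M(⊥, x₋ⱼ)) = c). In particular, there exist ε-differentially private mechanisms that violate the voluntary participation constraint. -/

import Mathlib

open scoped ENNReal

/-- Two inputs of a product space are neighboring if they differ in exactly one coordinate. -/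
def Neighboring {n : ℕ} {X : Fin n → Type*} (x x' : ∀ j, X j) : Prop :=
  ∃ j : Fin n, x j ≠ x' j ∧ ∀ i : Fin n, i ≠ j → x i = x' i

/-- `M` satisfies `(ε,δ)`-differential privacy. -/
def IsDP {n : ℕ} {X : Fin n → Type*} {O : Type*}
    (M : (∀ j, X j) → PMF O) (ε δ : ℝ) : Prop :=
  ∀ x x' : ∀ j, X j, Neighboring x x' → ∀ S : Set O,
    (M x).toOuterMeasure S ≤
      ENNReal.ofReal (Real.exp ε) * (M x').toOuterMeasure S + ENNReal.ofReal δ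

/-!
The mechanism publishes, through `ε`-randomized response, the single bit "agent `j` opted out".
Reporting that bit truthfully is likelier than lying by the factor `e ^ ε`, which is at once the
privacy guarantee and, for `ε > 0`, the reason why an agent whose utility is the indicator of the
published bit does strictly better by opting out, whatever the others report.
-/

section PureDP

variable {n : ℕ} {X : Fin n → Type*} {O : Type*}

theorem toOuterMeasure_le_mul_of_apply_le {p q : PMF O} {c : ℝ≥0∞} (h : ∀ o, p o ≤ c * q o)
    (S : Set O) : p.toOuterMeasure S ≤ c * q.toOuterMeasure S := by
  simp only [PMF.toOuterMeasure_apply, ← ENNReal.tsum_mul_left, ← Set.indicator_const_mul]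
  exact ENNReal.tsum_le_tsum fun o => Set.indicator_le_indicator (h o)

theorem isDP_zero_iff_apply_le {M : (∀ j, X j) → PMF O} {ε : ℝ} :
    IsDP M ε 0 ↔ ∀ x x', Neighboring x x' → ∀ o, M x o ≤ ENNReal.ofReal (Real.exp ε) * M x' o := by
  simp only [IsDP, ENNReal.ofReal_zero, add_zero]
  refine ⟨fun h x x' hx o => ?_, fun h x x' hx => toOuterMeasure_le_mul_of_apply_le (h x x' hx)⟩
  simpa only [PMF.toOuterMeasure_apply_singleton] using h x x' hx {o}

end PureDP

section RandomizedResponse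

variable {ε : ℝ}

theorem sigmoid_eq_exp_mul_sigmoid_neg (t : ℝ) :
    Real.sigmoid t = Real.exp t * Real.sigmoid (-t) := by
  simpa only [neg_neg, mul_comm] using (Real.sigmoid_mul_rexp_neg (-t)).symm

/-- Warner's randomized response: the bit `b` is reported truthfully with probability
`e ^ ε / (1 + e ^ ε)`, which is `Real.sigmoid ε`, and flipped with the complementary probability
`Real.sigmoid (-ε)`. -/
noncomputable def randomizedResponse (ε : ℝ) (b : Bool) : PMF Bool :=
  PMF.ofFintype (fun o => ENNReal.ofReal (Real.sigmoid (if o = b then ε else -ε))) <| by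
    rw [← ENNReal.ofReal_sum_of_nonneg fun _ _ => Real.sigmoid_nonneg _, Fintype.sum_bool]
    cases b <;> simp [Real.sigmoid_neg]

theorem randomizedResponse_apply (ε : ℝ) (b o : Bool) :
    randomizedResponse ε b o = ENNReal.ofReal (Real.sigmoid (if o = b then ε else -ε)) :=
  rfl

theorem randomizedResponse_apply_le_exp_mul (hε : 0 ≤ ε) (b b' o : Bool) :
    randomizedResponse ε b o ≤ ENNReal.ofReal (Real.exp ε) * randomizedResponse ε b' o := by
  have hmem (c : Bool) : (if o = c then ε else -ε) ∈ Set.Icc (-ε) ε := by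
    split_ifs <;> simp only [Set.mem_Icc, le_refl, neg_le_self hε, and_self]
  simp only [randomizedResponse_apply, ← ENNReal.ofReal_mul (Real.exp_nonneg ε)]
  refine ENNReal.ofReal_le_ofReal ?_
  calc
    Real.sigmoid (if o = b then ε else -ε) ≤ Real.sigmoid ε := Real.sigmoid_le (hmem b).2
    _ = Real.exp ε * Real.sigmoid (-ε) := sigmoid_eq_exp_mul_sigmoid_neg ε
    _ ≤ Real.exp ε * Real.sigmoid (if o = b' then ε else -ε) := by
      gcongr
      exact (hmem b').1

theorem randomizedResponse_apply_lt_apply_self (hε : 0 < ε) {b o : Bool} (hob : o ≠ b) :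
    randomizedResponse ε b o < randomizedResponse ε o o := by
  rw [randomizedResponse_apply, randomizedResponse_apply, if_neg hob, if_pos rfl,
    ENNReal.ofReal_lt_ofReal_iff (Real.sigmoid_pos ε)]
  exact Real.sigmoid_lt (neg_lt_self hε)

end RandomizedResponse

section OptOutMechanism

variable {ε : ℝ} {n : ℕ} {X : Fin n → Type*} {j : Fin n} {bot : X j}

open Classical in
/-- The mechanism that discloses, through randomized response, whether agent `j` reports the
opt-out value `bot`; the reports of the other agents are ignored. -/
noncomputable def optOutMechanism (ε : ℝ) (bot : X j) (x : ∀ i, X i) : PMF Bool :=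
  randomizedResponse ε (decide (x j = bot))

theorem isDP_optOutMechanism (hε : 0 ≤ ε) : IsDP (optOutMechanism ε bot) ε 0 :=
  isDP_zero_iff_apply_le.2 fun _ _ _ => randomizedResponse_apply_le_exp_mul hε _ _

theorem optOutMechanism_apply_true_lt (hε : 0 < ε) {x x' : ∀ i, X i} (hx : x j ≠ bot)
    (hx' : x' j = bot) : optOutMechanism ε bot x true < optOutMechanism ε bot x' true := by
  simp only [optOutMechanism, hx, hx', decide_true, decide_false]
  exact randomizedResponse_apply_lt_apply_self hε (by decide)

end OptOutMechanism

theorem sum_single_one_mul_toReal_apply {C : Type*} [Fintype C] [DecidableEq C] (p : PMF C)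
    (c₀ : C) : ∑ c, (Pi.single c₀ 1 : C → ℝ) c * (p c).toReal = (p c₀).toReal := by
  simp only [Pi.single_apply, ite_mul, one_mul, zero_mul, Finset.sum_ite_eq', Finset.mem_univ,
    if_true]

theorem stmt9_general {ε : ℝ} (hε : 0 < ε) {n : ℕ} {X : Fin n → Type*} (bot : ∀ j, X j)
    (j : Fin n) :
    ∃ (O : Type) (M : (∀ j, X j) → PMF O) (C : Type) (instC : Fintype C) (f : O → C) (u : C → ℝ),
      IsDP M ε 0 ∧
      ∀ (x : ∀ i, X i) (a : X j), a ≠ bot j →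
        ∑ c ∈ @Finset.univ C instC, u c * (((M (Function.update x j a)).map f) c).toReal <
        ∑ c ∈ @Finset.univ C instC,
          u c * (((M (Function.update x j (bot j))).map f) c).toReal := by
  refine ⟨Bool, optOutMechanism ε (bot j), Bool, inferInstance, id, Pi.single true 1,
    isDP_optOutMechanism hε.le, fun x a ha => ?_⟩
  simp only [PMF.map_id, sum_single_one_mul_toReal_apply]
  refine ENNReal.toReal_strict_mono (PMF.apply_ne_top _ _) (optOutMechanism_apply_true_lt hε ?_ ?_)
  · rwa [Function.update_self]
  · exact Function.update_self ..

/-- for every `ε > 0` there exist a number of agents `n`, finite response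
spaces `X j` each with an opt-out value `bot j`, an `ε`-DP mechanism `M`, a post-processor
`f` into a finite consequence space, a utility function `u`, an agent `j`, and an
environment (encoded by `x`, whose coordinates other than `j` form the environment) such
that every non-opt-out report `a` yields strictly smaller expected utility than opting
out: the voluntary participation constraint can fail under `ε`-differential privacy. -/
theorem stmt9 (ε : ℝ) (hε : 0 < ε) :
    ∃ (n : ℕ) (X : Fin n → Type) (_ : ∀ j, Fintype (X j)) (bot : ∀ j, X j)
      (O : Type) (M : (∀ j, X j) → PMF O)
      (C : Type) (instC : Fintype C) (f : O → C) (u : C → ℝ)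
      (j : Fin n) (x : ∀ i, X i),
      IsDP M ε 0 ∧
      ∀ a : X j, a ≠ bot j →
        ∑ c ∈ @Finset.univ C instC, u c * (((M (Function.update x j a)).map f) c).toReal <
        ∑ c ∈ @Finset.univ C instC,
          u c * (((M (Function.update x j (bot j))).map f) c).toReal := by
  obtain ⟨O, M, C, instC, f, u, hM, hu⟩ :=
    stmt9_general hε (X := fun _ : Fin 1 => Bool) (fun _ => false) 0
  exact ⟨1, _, fun _ => inferInstance, fun _ => false, O, M, C, instC, f, u, 0,
    fun _ => false, hM, hu _⟩
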